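/- arXiv:math/0612123 — 2 statements merged into one kernel-verified Lean document; each statement's English description precedes it below -/
import Mathlib

section
/- For every ε > 0, the function v_ε is differentiable on ℝ² with gradient ∇v_ε(x) = −4x/(ε² + |x|²), and for every r₀ > 0 the integral ∫_{B(0,r₀)} |∇v_ε(x)|² dx equals 16π [ ln((ε² + r₀²)/ε²) + ε²/(ε² + r₀²) − 1 ]. In particular, ∫_{B(0,r₀)} |∇v_ε|² dx = 32π ln(1/ε) + O(1) as ε → 0⁺. -/
open Real MeasureTheory

/-- The function `y ↦ log (ε² / (ε² + ‖y‖²)²)` has gradient `-4 x / (ε² + ‖x‖²)` at `x`. -/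
theorem hasGradientAt_log_bubble {E : Type*} [NormedAddCommGroup E] [InnerProductSpace ℝ E]
    [CompleteSpace E] {ε : ℝ} (hε : 0 < ε) (x : E) :
    HasGradientAt (fun y : E => Real.log (ε ^ 2 / (ε ^ 2 + ‖y‖ ^ 2) ^ 2))
      ((-4 / (ε ^ 2 + ‖x‖ ^ 2)) • x) x := by
  have hpos : ∀ y : E, 0 < ε ^ 2 + ‖y‖ ^ 2 := fun y => by positivity
  have hfun : (fun y : E => Real.log (ε ^ 2 / (ε ^ 2 + ‖y‖ ^ 2) ^ 2)) =
      fun y : E => Real.log (ε ^ 2) - 2 * Real.log (ε ^ 2 + ‖y‖ ^ 2) := by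
    funext y
    rw [Real.log_div (by positivity) (pow_ne_zero _ (hpos y).ne')]
    norm_num [Real.log_pow]
  rw [hfun, hasGradientAt_iff_hasFDerivAt]
  have hsq := (hasStrictFDerivAt_norm_sq x).hasFDerivAt.const_add (ε ^ 2)
  refine (((hsq.log (hpos x).ne').const_mul 2).const_sub (Real.log (ε ^ 2))).congr_fderiv ?_
  ext y
  simp
  ring

/-- A radial integral over a disc in the plane, in polar coordinates. -/
theorem setIntegral_ball_fun_norm_fin_two (f : ℝ → ℝ) {r : ℝ} (hr : 0 < r) :
    ∫ x in Metric.ball (0 : EuclideanSpace ℝ (Fin 2)) r, f ‖x‖ =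
      2 * π * ∫ t in (0 : ℝ)..r, t * f t := by
  have hind : ∀ x : EuclideanSpace ℝ (Fin 2),
      (Metric.ball (0 : EuclideanSpace ℝ (Fin 2)) r).indicator (fun x => f ‖x‖) x =
        (Set.Iio r).indicator f ‖x‖ := fun x => by
    by_cases hx : ‖x‖ < r <;> simp [hx]
  have hmul : ∀ t : ℝ, t ^ (2 - 1) • (Set.Iio r).indicator f t =
      (Set.Iio r).indicator (fun t => t * f t) t := fun t => by
    simp [Set.indicator_apply]
  have hvol : volume.real (Metric.ball (0 : EuclideanSpace ℝ (Fin 2)) 1) = π := by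
    simp [Measure.real, Real.pi_nonneg]
  rw [← integral_indicator Metric.isOpen_ball.measurableSet]
  simp_rw [hind]
  rw [integral_fun_norm_addHaar, hvol, finrank_euclideanSpace_fin]
  simp_rw [hmul]
  rw [setIntegral_indicator measurableSet_Iio, Set.Ioi_inter_Iio,
    intervalIntegral.integral_of_le hr.le, integral_Ioc_eq_integral_Ioo]
  simp [mul_assoc]

theorem integral_mul_sq_div_sq_add_sq {ε : ℝ} (hε : 0 < ε) (r : ℝ) :
    ∫ t in (0 : ℝ)..r, t * (-4 / (ε ^ 2 + t ^ 2) * t) ^ 2 =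
      8 * (Real.log ((ε ^ 2 + r ^ 2) / ε ^ 2) + ε ^ 2 / (ε ^ 2 + r ^ 2) - 1) := by
  have hpos : ∀ t : ℝ, 0 < ε ^ 2 + t ^ 2 := fun t => by positivity
  have hderiv : ∀ t : ℝ, HasDerivAt
      (fun t => 8 * (Real.log (ε ^ 2 + t ^ 2) + ε ^ 2 / (ε ^ 2 + t ^ 2)))
      (t * (-4 / (ε ^ 2 + t ^ 2) * t) ^ 2) t := fun t => by
    have hsq : HasDerivAt (fun t : ℝ => ε ^ 2 + t ^ 2) (2 * t) t := by
      simpa using (hasDerivAt_pow 2 t).const_add (ε ^ 2)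
    have hne := (hpos t).ne'
    refine (((hsq.log hne).add ((hasDerivAt_const t (ε ^ 2)).div hsq hne)).const_mul
      8).congr_deriv ?_
    field_simp
    ring
  have hcont : Continuous fun t : ℝ => t * (-4 / (ε ^ 2 + t ^ 2) * t) ^ 2 := by
    have : ∀ t : ℝ, ε ^ 2 + t ^ 2 ≠ 0 := fun t => (hpos t).ne'
    fun_prop (disch := assumption)
  rw [intervalIntegral.integral_eq_sub_of_hasDerivAt (fun t _ => hderiv t)
    (hcont.intervalIntegrable 0 r), Real.log_div (hpos r).ne' (by positivity)]
  have : ε ^ 2 / (ε ^ 2 + 0 ^ 2) = 1 := by field_simp; simp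
  rw [this]
  norm_num
  ring

/-- The Dirichlet energy of `log (ε² / (ε² + |x|²)²)` on a disc. -/
theorem setIntegral_ball_norm_sq_gradient_log_bubble {ε r : ℝ} (hε : 0 < ε) (hr : 0 < r) :
    ∫ x in Metric.ball (0 : EuclideanSpace ℝ (Fin 2)) r, ‖(-4 / (ε ^ 2 + ‖x‖ ^ 2)) • x‖ ^ 2 =
      16 * π * (Real.log ((ε ^ 2 + r ^ 2) / ε ^ 2) + ε ^ 2 / (ε ^ 2 + r ^ 2) - 1) := by
  have hnorm : ∀ x : EuclideanSpace ℝ (Fin 2), ‖(-4 / (ε ^ 2 + ‖x‖ ^ 2)) • x‖ ^ 2 =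
      (-4 / (ε ^ 2 + ‖x‖ ^ 2) * ‖x‖) ^ 2 := fun x => by
    rw [norm_smul, mul_pow, mul_pow, Real.norm_eq_abs, sq_abs]
  simp_rw [hnorm]
  rw [setIntegral_ball_fun_norm_fin_two (fun t => (-4 / (ε ^ 2 + t ^ 2) * t) ^ 2) hr,
    integral_mul_sq_div_sq_add_sq hε]
  ring

/-- For `ε > 0`, `v_ε(x) = ln(ε²/(ε² + |x|²)²)` on `ℝ²` is differentiable with gradient
`∇v_ε(x) = −4x/(ε² + |x|²)`; for every `r₀ > 0`,
`∫_{B(0,r₀)} |∇v_ε|² dx = 16π [ ln((ε² + r₀²)/ε²) + ε²/(ε² + r₀²) − 1 ]`,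
and in particular `∫_{B(0,r₀)} |∇v_ε|² dx = 32π ln(1/ε) + O(1)` as `ε → 0⁺`. -/
theorem stmt_1 :
    (∀ ε : ℝ, 0 < ε → ∀ x : EuclideanSpace ℝ (Fin 2),
      HasGradientAt (fun y : EuclideanSpace ℝ (Fin 2) =>
          Real.log (ε ^ 2 / (ε ^ 2 + ‖y‖ ^ 2) ^ 2))
        ((-4 / (ε ^ 2 + ‖x‖ ^ 2)) • x) x) ∧
    (∀ ε : ℝ, 0 < ε → ∀ r₀ : ℝ, 0 < r₀ →
      ∫ x in Metric.ball (0 : EuclideanSpace ℝ (Fin 2)) r₀,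
          ‖(-4 / (ε ^ 2 + ‖x‖ ^ 2)) • x‖ ^ 2 ∂volume =
        16 * π * (Real.log ((ε ^ 2 + r₀ ^ 2) / ε ^ 2) + ε ^ 2 / (ε ^ 2 + r₀ ^ 2) - 1)) ∧
    (∀ r₀ : ℝ, 0 < r₀ → ∃ C > (0:ℝ), ∃ δ > (0:ℝ), ∀ ε ∈ Set.Ioo (0:ℝ) δ,
      |(∫ x in Metric.ball (0 : EuclideanSpace ℝ (Fin 2)) r₀,
          ‖(-4 / (ε ^ 2 + ‖x‖ ^ 2)) • x‖ ^ 2 ∂volume) -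
        32 * π * Real.log (1 / ε)| ≤ C) := by
  refine ⟨fun ε hε x => hasGradientAt_log_bubble hε x,
    fun ε hε r₀ hr₀ => setIntegral_ball_norm_sq_gradient_log_bubble hε hr₀, fun r₀ hr₀ => ?_⟩
  refine ⟨16 * π * (|Real.log (r₀ ^ 2)| + |Real.log (1 + r₀ ^ 2)| + 1), by positivity, 1,
    one_pos, fun ε ⟨hε, hε1⟩ => ?_⟩
  rw [setIntegral_ball_norm_sq_gradient_log_bubble hε hr₀,
    Real.log_div (by positivity) (by positivity), Real.log_pow, one_div, Real.log_inv]
  have hform : 16 * π * (Real.log (ε ^ 2 + r₀ ^ 2) - (2 : ℕ) * Real.log ε +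
      ε ^ 2 / (ε ^ 2 + r₀ ^ 2) - 1) - 32 * π * -Real.log ε =
      16 * π * (Real.log (ε ^ 2 + r₀ ^ 2) + ε ^ 2 / (ε ^ 2 + r₀ ^ 2) - 1) := by
    push_cast
    ring
  rw [hform, abs_mul, abs_of_pos (by positivity : 0 < 16 * π)]
  refine mul_le_mul_of_nonneg_left ?_ (by positivity)
  have hlower : Real.log (r₀ ^ 2) ≤ Real.log (ε ^ 2 + r₀ ^ 2) :=
    Real.log_le_log (by positivity) (by nlinarith)
  have hupper : Real.log (ε ^ 2 + r₀ ^ 2) ≤ Real.log (1 + r₀ ^ 2) :=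
    Real.log_le_log (by positivity) (by nlinarith)
  have hfrac_nonneg : 0 ≤ ε ^ 2 / (ε ^ 2 + r₀ ^ 2) := by positivity
  have hfrac_le : ε ^ 2 / (ε ^ 2 + r₀ ^ 2) ≤ 1 :=
    div_le_one_of_le₀ (by nlinarith) (by positivity)
  rw [abs_le]
  constructor
  · linarith [neg_abs_le (Real.log (r₀ ^ 2)), abs_nonneg (Real.log (1 + r₀ ^ 2))]
  · linarith [le_abs_self (Real.log (1 + r₀ ^ 2)), abs_nonneg (Real.log (r₀ ^ 2))]
end

section
/- Let E be a real Hilbert space and G : E → ℝ convex and continuously Fréchet differentiable, with G(0) = 0, G(u) + G(−u) ≥ 0 for all u ∈ E, and with the derivative dG mapping bounded subsets of E to bounded subsets of the dual E* (for instance, ‖dG(u)‖ ≤ C exp(a‖u‖²) for some constants C, a > 0). Fix λ₁, λ₂ > 0 and ū ∈ E; for ε ≥ 0 set I_ε(u) = ½‖u‖² − (λ₁ + ε) G(u) − (λ₂ + ε) G(−u), let Γ = { γ ∈ C([0,1], E) : γ(0) = 0, γ(1) = ū }, and c(ε) = inf_{γ ∈ Γ} max_{t} I_ε(γ(t)). Assume: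 (a) I_0(ū) < 0; (b) there exist ρ > 0 and η₀ > 0 with c(ε) ≥ ρ for all ε ∈ [0, η₀]; (c) there exists c' ∈ ℝ with c(ε) = c(0) + c' ε + o(ε) as ε → 0⁺. Then there exists a sequence (u_n) in E with sup_n ‖u_n‖ < ∞, I_0(u_n) → c(0), and ‖dI_0(u_n)‖_{E*} → 0; that is, I_0 admits a bounded Palais–Smale sequence at the mountain pass level c(0). -/
open Real MeasureTheory Filter Asymptotics Topology

/-- Ekeland's variational principle, weak form. -/
theorem LowerSemicontinuous.exists_forall_le_add_mul_dist {X : Type*} [MetricSpace X]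
    [CompleteSpace X] [Nonempty X] {f : X → ℝ} (hf : LowerSemicontinuous f)
    (hbdd : BddBelow (Set.range f)) {κ : ℝ} (hκ : 0 < κ) :
    ∃ x, ∀ y, f x ≤ f y + κ * dist x y := by
  have step : ∀ (x : X) (n : ℕ), ∃ y, f y + κ * dist x y ≤ f x ∧
      ∀ z, f z + κ * dist x z ≤ f x → f y < f z + 1 / ((n : ℝ) + 1) := by
    intro x n
    set S := f '' {y | f y + κ * dist x y ≤ f x}
    have hS : S.Nonempty := ⟨f x, x, by simp, rfl⟩
    have hSb : BddBelow S := hbdd.mono (Set.image_subset_range _ _)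
    obtain ⟨_, ⟨y, hy, rfl⟩, hlt⟩ :=
      exists_lt_of_csInf_lt hS (lt_add_of_pos_right (sInf S) (Nat.one_div_pos_of_nat (n := n)))
    refine ⟨y, hy, fun z hz => ?_⟩
    have : sInf S ≤ f z := csInf_le hSb ⟨z, hz, rfl⟩
    linarith
  choose next hnext_le hnext_lt using step
  obtain ⟨x₀⟩ := ‹Nonempty X›
  let x : ℕ → X := fun n => Nat.rec x₀ (fun k y => next y k) n
  have hx : ∀ n, x (n + 1) = next (x n) n := fun n => rfl
  have hle : ∀ n m, n ≤ m → f (x m) + κ * dist (x n) (x m) ≤ f (x n) := by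
    intro n m hnm
    induction m, hnm using Nat.le_induction with
    | base => simp
    | succ k _ ih =>
      have h1 := hnext_le (x k) k
      rw [← hx] at h1
      have h2 := mul_le_mul_of_nonneg_left (dist_triangle (x n) (x k) (x (k + 1))) hκ.le
      linarith
  have hanti : Antitone fun n => f (x n) := fun n m hnm => by
    have := hle n m hnm
    have := mul_nonneg hκ.le (dist_nonneg (x := x n) (y := x m))
    simp only
    linarith
  have hlim := tendsto_atTop_ciInf hanti
    (hbdd.mono (by rintro _ ⟨n, rfl⟩; exact ⟨x n, rfl⟩))
  set L := ⨅ n, f (x n)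
  have hL : ∀ n, L ≤ f (x n) := hanti.le_of_tendsto hlim
  have hcau : CauchySeq x := by
    refine cauchySeq_of_le_tendsto_0' (fun n => (f (x n) - L) / κ) (fun n m hnm => ?_) ?_
    · rw [le_div_iff₀ hκ]
      linarith [hle n m hnm, hL m]
    · simpa using (hlim.sub_const L).div_const κ
  obtain ⟨a, ha⟩ := cauchySeq_tendsto_of_complete hcau
  have hmem : ∀ n, f a + κ * dist (x n) a ≤ f (x n) := by
    intro n
    have hlsc : LowerSemicontinuous fun y => f y + κ * dist (x n) y :=
      hf.add (by fun_prop : Continuous fun y => κ * dist (x n) y).lowerSemicontinuous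
    exact (hlsc.isClosed_preimage (f (x n))).mem_of_tendsto ha
      (eventually_atTop.2 ⟨n, fun m hm => hle n m hm⟩)
  refine ⟨a, fun y => ?_⟩
  by_contra! hlt
  have hdist := mul_nonneg hκ.le (dist_nonneg (x := a) (y := y))
  have hfy : ∀ n, f (x (n + 1)) ≤ f y + 1 / ((n : ℝ) + 1) := fun n => by
    refine (hnext_lt (x n) n y ?_).le
    have := mul_le_mul_of_nonneg_left (dist_triangle (x n) a y) hκ.le
    linarith [hmem n]
  have hLy : L ≤ f y := by
    have h := le_of_tendsto_of_tendsto' ((tendsto_add_atTop_iff_nat 1).2 hlim)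
      ((tendsto_one_div_add_atTop_nhds_zero_nat (𝕜 := ℝ)).const_add (f y)) hfy
    simpa using h
  have haL : f a ≤ L := ge_of_tendsto' hlim fun n => by
    have := mul_nonneg hκ.le (dist_nonneg (x := x n) (y := a))
    linarith [hmem n]
  linarith

/-- A bound on the directional derivative along a segment bounds the increment. -/
theorem le_add_mul_of_hasFDerivAt_segment_le {E : Type*} [NormedAddCommGroup E] [NormedSpace ℝ E]
    {F : E → ℝ} {F' : E → E →L[ℝ] ℝ} (hF : ∀ u, HasFDerivAt F (F' u) u) {x v : E} {s C : ℝ}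
    (hs : 0 ≤ s) (hC : ∀ r ∈ Set.Icc 0 s, F' (x + r • v) v ≤ C) :
    F (x + s • v) ≤ F x + C * s := by
  have hd : ∀ r : ℝ, HasDerivAt (fun r : ℝ => F (x + r • v)) (F' (x + r • v) v) r := fun r => by
    have h : HasDerivAt (fun r : ℝ => x + r • v) v r := by
      simpa using ((hasDerivAt_id r).smul_const v).const_add x
    exact (hF _).comp_hasDerivAt r h
  have := (convex_Icc 0 s).image_sub_le_mul_sub_of_deriv_le (f := fun r : ℝ => F (x + r • v))
    (fun r _ => (hd r).continuousAt.continuousWithinAt)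
    (fun r _ => (hd r).differentiableAt.differentiableWithinAt)
    (fun r hr => (hd r).deriv ▸ hC r (interior_subset hr)) 0 ⟨le_rfl, hs⟩ s ⟨hs, le_rfl⟩ hs
  simp only [zero_smul, add_zero, sub_zero] at this
  linarith

/-- A common strict descent direction at the points of a path near the maximum of `F₁` lets one
lower that maximum at a linear rate, without raising `F₀` and without moving the low points. -/
theorem exists_path_descent {T E : Type*} [TopologicalSpace T] [CompactSpace T]
    [NormedAddCommGroup E] [NormedSpace ℝ E]
    {F₀ F₁ : E → ℝ} {D₀ D₁ : E → E →L[ℝ] ℝ} (hF₀ : ∀ u, HasFDerivAt F₀ (D₀ u) u)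
    (hF₁ : ∀ u, HasFDerivAt F₁ (D₁ u) u) (hD₀ : Continuous D₀) (hD₁ : Continuous D₁)
    (γ V : C(T, E)) (hV : ∀ t, ‖V t‖ ≤ 1) {m M κ : ℝ} (hmM : m < M) (hκ : 0 < κ)
    (hM : ∀ t, F₁ (γ t) ≤ M)
    (h₀ : ∀ t, m ≤ F₁ (γ t) → D₀ (γ t) (V t) < -(4 * κ))
    (h₁ : ∀ t, m ≤ F₁ (γ t) → D₁ (γ t) (V t) < -(4 * κ)) :
    ∃ s > 0, ∃ γ' : C(T, E), (∀ t, F₁ (γ t) ≤ m → γ' t = γ t) ∧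
      (∀ t, F₀ (γ' t) ≤ F₀ (γ t)) ∧ dist γ γ' ≤ s ∧ ∀ t, F₁ (γ' t) ≤ M - 2 * κ * s := by
  have hF₁c : Continuous F₁ := continuous_iff_continuousAt.2 fun u => (hF₁ u).continuousAt
  have hK : IsCompact {t | m ≤ F₁ (γ t)} :=
    (isClosed_le continuous_const (by fun_prop)).isCompact
  have unif : ∀ D : E → E →L[ℝ] ℝ, Continuous D →
      (∀ t, m ≤ F₁ (γ t) → D (γ t) (V t) < -(4 * κ)) →
      ∀ᶠ r : ℝ in 𝓝 0, ∀ t ∈ {t | m ≤ F₁ (γ t)}, D (γ t + r • V t) (V t) < -(4 * κ) := by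
    intro D hD h
    refine hK.eventually_forall_of_forall_eventually fun t ht => ?_
    have hc : Continuous fun z : ℝ × T => D (γ z.2 + z.1 • V z.2) (V z.2) :=
      (hD.comp (by fun_prop)).clm_apply (by fun_prop)
    exact hc.continuousAt.eventually_lt continuousAt_const (by simpa using h t ht)
  obtain ⟨r₀, hr₀, hr⟩ := Metric.eventually_nhds_iff.1 ((unif D₀ hD₀ h₀).and (unif D₁ hD₁ h₁))
  have hgap : 0 < M - m := sub_pos.2 hmM
  obtain ⟨s, hs, hsr, hsM⟩ : ∃ s > 0, s < r₀ ∧ 4 * κ * s ≤ M - m := by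
    refine ⟨min (r₀ / 2) ((M - m) / (4 * κ)), by positivity, ?_, ?_⟩
    · exact (min_le_left _ _).trans_lt (half_lt_self hr₀)
    · calc 4 * κ * _ ≤ 4 * κ * ((M - m) / (4 * κ)) := by gcongr; exact min_le_right _ _
        _ = M - m := by field_simp
  let φ : C(T, ℝ) := ⟨fun t => max 0 ((F₁ (γ t) - m) / (M - m)), by fun_prop⟩
  have hφ0 : ∀ t, 0 ≤ φ t := fun t => le_max_left _ _
  have hφ1 : ∀ t, φ t ≤ 1 := fun t =>
    max_le zero_le_one ((div_le_one hgap).2 (by linarith [hM t]))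
  have hφm : ∀ t, F₁ (γ t) ≤ m → φ t = 0 := fun t ht =>
    max_eq_left (div_nonpos_of_nonpos_of_nonneg (by linarith) hgap.le)
  have key : ∀ (F : E → ℝ) (D : E → E →L[ℝ] ℝ), (∀ u, HasFDerivAt F (D u) u) →
      (∀ r : ℝ, dist r 0 < r₀ → ∀ t ∈ {t | m ≤ F₁ (γ t)}, D (γ t + r • V t) (V t) < -(4 * κ)) →
      ∀ t, F (γ t + (s * φ t) • V t) ≤ F (γ t) - 4 * κ * (s * φ t) := by
    intro F D hF h t
    rcases le_total (F₁ (γ t)) m with ht | ht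
    · simp [hφm t ht]
    · have hsφ : s * φ t ≤ s := mul_le_of_le_one_right hs.le (hφ1 t)
      have := le_add_mul_of_hasFDerivAt_segment_le hF (x := γ t) (v := V t) (C := -(4 * κ))
        (mul_nonneg hs.le (hφ0 t)) fun r hr => (h r (by
          rw [Real.dist_eq, sub_zero, abs_of_nonneg hr.1]; linarith [hr.2]) t ht).le
      linarith
  refine ⟨s, hs, ⟨fun t => γ t + (s * φ t) • V t, by fun_prop⟩, ?_, ?_, ?_, ?_⟩
  · intro t ht
    simp [hφm t ht]
  · intro t
    have := key F₀ D₀ hF₀ (fun r h => (hr h).1) t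
    have : 0 ≤ 4 * κ * (s * φ t) := by have := hφ0 t; positivity
    simp only [ContinuousMap.coe_mk]
    linarith
  · refine (ContinuousMap.dist_le hs.le).2 fun t => ?_
    simp only [ContinuousMap.coe_mk, dist_self_add_right, norm_smul, norm_mul, Real.norm_eq_abs,
      abs_of_pos hs, abs_of_nonneg (hφ0 t)]
    calc s * φ t * ‖V t‖ ≤ s * 1 * 1 := by
          gcongr
          exacts [hφ1 t, hV t]
      _ = s := by ring
  · intro t
    have h := key F₁ D₁ hF₁ (fun r h => (hr h).2) t
    simp only [ContinuousMap.coe_mk]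
    rcases le_total (1 / 2) (φ t) with hφt | hφt
    · have : 4 * κ * (s * (1 / 2)) ≤ 4 * κ * (s * φ t) := by gcongr
      linarith [hM t]
    · have h1 : (F₁ (γ t) - m) / (M - m) ≤ 1 / 2 := (le_max_right _ _).trans hφt
      rw [div_le_iff₀ hgap] at h1
      have : 0 ≤ 4 * κ * (s * φ t) := by have := hφ0 t; positivity
      linarith

/-- A constrained mountain pass principle for two `C¹` functionals: if `F₁` has mountain pass level
at least `c₁` and some path stays below the level `C` of `F₀`, there is a point above the level
`m < c₁` of `F₁` and below the level `C` of `F₀` at which the derivative of `F₀` is small or not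
well approximated by that of `F₁`. -/
theorem exists_almost_critical_of_mountain_pass {E : Type*} [NormedAddCommGroup E]
    [InnerProductSpace ℝ E] [CompleteSpace E] {F₀ F₁ : E → ℝ} {D₀ D₁ : E → E →L[ℝ] ℝ}
    (hF₀ : ∀ u, HasFDerivAt F₀ (D₀ u) u) (hF₁ : ∀ u, HasFDerivAt F₁ (D₁ u) u)
    (hD₀ : Continuous D₀) (hD₁ : Continuous D₁) {a b : E} {C c₁ m δ : ℝ} (hδ : 0 < δ)
    (hm : m < c₁) (ha : F₁ a ≤ m) (hb : F₁ b ≤ m)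
    (hγ : ∃ γ : C(unitInterval, E), γ 0 = a ∧ γ 1 = b ∧ ∀ t, F₀ (γ t) ≤ C)
    (hc₁ : ∀ γ : C(unitInterval, E), γ 0 = a → γ 1 = b → c₁ ≤ ⨆ t, F₁ (γ t)) :
    ∃ u, F₀ u ≤ C ∧ m ≤ F₁ u ∧ (‖D₁ u - D₀ u‖ ≤ δ / 4 → ‖D₀ u‖ < δ) := by
  by_contra! hcon
  have hF₀c : Continuous F₀ := continuous_iff_continuousAt.2 fun u => (hF₀ u).continuousAt
  have hF₁c : Continuous F₁ := continuous_iff_continuousAt.2 fun u => (hF₁ u).continuousAt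
  let P : Set C(unitInterval, E) := {γ | γ 0 = a ∧ γ 1 = b ∧ ∀ t, F₀ (γ t) ≤ C}
  have hPc : IsClosed P := by
    have h : IsClosed {γ : C(unitInterval, E) | ∀ t, F₀ (γ t) ≤ C} := by
      rw [Set.ofPred_forall]
      exact isClosed_iInter fun t => isClosed_le (by fun_prop) continuous_const
    have ha' : IsClosed {γ : C(unitInterval, E) | γ 0 = a} :=
      isClosed_eq (by fun_prop) continuous_const
    have hb' : IsClosed {γ : C(unitInterval, E) | γ 1 = b} :=
      isClosed_eq (by fun_prop) continuous_const
    exact ha'.inter (hb'.inter h)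
  have : CompleteSpace P := hPc.completeSpace_coe
  have : Nonempty P := let ⟨γ, h⟩ := hγ; ⟨⟨γ, h⟩⟩
  have hbdd : ∀ γ : C(unitInterval, E), BddAbove (Set.range fun t => F₁ (γ t)) := fun γ =>
    (isCompact_range (by fun_prop)).bddAbove
  have hlsc : LowerSemicontinuous fun γ : P => ⨆ t, F₁ (γ.1 t) :=
    lowerSemicontinuous_ciSup (fun γ => hbdd γ.1) fun t =>
      (by fun_prop : Continuous fun γ : P => F₁ (γ.1 t)).lowerSemicontinuous
  obtain ⟨⟨γ, hγ0, hγ1, hγC⟩, hmin⟩ := hlsc.exists_forall_le_add_mul_dist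
    ⟨c₁, by rintro _ ⟨γ, rfl⟩; exact hc₁ γ.1 γ.2.1 γ.2.2.1⟩ (by positivity : 0 < δ / 8)
  have hpos : ∀ t, 0 < max ‖D₀ (γ t)‖ δ := fun t => lt_max_of_lt_right hδ
  let V : C(unitInterval, E) :=
    ⟨fun t => -((max ‖D₀ (γ t)‖ δ)⁻¹ • (InnerProductSpace.toDual ℝ E).symm (D₀ (γ t))), by
      have h : Continuous fun t => D₀ (γ t) := by fun_prop
      refine (Continuous.smul (Continuous.inv₀ (by fun_prop) fun t => (hpos t).ne') ?_).neg
      exact (InnerProductSpace.toDual ℝ E).symm.continuous.comp h⟩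
  have hVt : ∀ t, V t =
    -((max ‖D₀ (γ t)‖ δ)⁻¹ • (InnerProductSpace.toDual ℝ E).symm (D₀ (γ t))) := fun t => rfl
  have hV : ∀ t, ‖V t‖ ≤ 1 := fun t => by
    rw [hVt, norm_neg, norm_smul, LinearIsometryEquiv.norm_map, norm_inv, Real.norm_eq_abs,
      abs_of_pos (hpos t), inv_mul_le_one₀ (hpos t)]
    exact le_max_left _ _
  have hD₀V : ∀ t, δ ≤ ‖D₀ (γ t)‖ → D₀ (γ t) (V t) ≤ -δ := fun t ht => by
    have h : D₀ (γ t) ((InnerProductSpace.toDual ℝ E).symm (D₀ (γ t))) = ‖D₀ (γ t)‖ ^ 2 := by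
      rw [← InnerProductSpace.toDual_symm_apply, real_inner_self_eq_norm_sq,
        LinearIsometryEquiv.norm_map]
    have hne : ‖D₀ (γ t)‖ ≠ 0 := (hδ.trans_le ht).ne'
    rw [hVt, map_neg, map_smul, h, max_eq_left ht, smul_eq_mul, sq, inv_mul_cancel_left₀ hne]
    linarith
  have hcM := hc₁ γ hγ0 hγ1
  obtain ⟨s, hs, γ', hfix, hdec, hdist, hlow⟩ := exists_path_descent hF₀ hF₁ hD₀ hD₁ γ V hV
    (hm.trans_le hcM) (by positivity : 0 < δ / 8) (fun t => le_ciSup (hbdd γ) t)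
    (fun t ht => by
      have := hD₀V t (hcon _ (hγC t) ht).2
      linarith)
    (fun t ht => by
      have ht' := hcon _ (hγC t) ht
      have h1 := hD₀V t ht'.2
      have h2 : (D₁ (γ t) - D₀ (γ t)) (V t) ≤ δ / 4 * 1 :=
        (le_abs_self _).trans (((D₁ (γ t) - D₀ (γ t)).le_opNorm (V t)).trans
          (mul_le_mul ht'.1 (hV t) (norm_nonneg _) (by positivity)))
      rw [sub_apply] at h2
      linarith)
  have h := hmin ⟨γ', (hfix 0 (hγ0 ▸ ha)).trans hγ0, (hfix 1 (hγ1 ▸ hb)).trans hγ1,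
    fun t => (hdec t).trans (hγC t)⟩
  have hsup : ⨆ t, F₁ (γ' t) ≤ (⨆ t, F₁ (γ t)) - 2 * (δ / 8) * s := ciSup_le hlow
  have hd : δ / 8 * dist γ γ' ≤ δ / 8 * s := by gcongr
  have hsδ : 0 < δ * s := by positivity
  simp only [Subtype.dist_eq] at h
  linarith

/-- A differentiable convex function lies above its tangent at the origin. -/
theorem ConvexOn.apply_le_sub_of_hasFDerivAt_zero {E : Type*} [NormedAddCommGroup E]
    [NormedSpace ℝ E] {G : E → ℝ} (hG : ConvexOn ℝ Set.univ G) {L : E →L[ℝ] ℝ}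
    (hL : HasFDerivAt G L 0) (u : E) : L u ≤ G u - G 0 := by
  have hconv : ConvexOn ℝ Set.univ fun t : ℝ => G (t • u) := by
    simpa [Function.comp_def] using hG.comp_linearMap (LinearMap.toSpanSingleton ℝ E u)
  have hd : HasDerivAt (fun t : ℝ => G (t • u)) (L u) 0 := by
    have h : HasDerivAt (fun t : ℝ => t • u) u 0 := by
      simpa using (hasDerivAt_id (0 : ℝ)).smul_const u
    exact HasFDerivAt.comp_hasDerivAt (f := fun t : ℝ => t • u) 0 (by simpa using hL) h
  simpa [slope_def_field] using
    hconv.le_slope_of_hasDerivAt (Set.mem_univ 0) (Set.mem_univ 1) zero_lt_one hd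

/-- Struwe's monotonicity trick: existence of a bounded Palais–Smale sequence at the
mountain pass level. Let `E` be a real Hilbert space, `G : E → ℝ` convex and `C¹` with
`G(0) = 0`, `G(u) + G(−u) ≥ 0`, and derivative mapping bounded sets to bounded sets.
Fix `λ₁, λ₂ > 0`, `ū ∈ E`, `I_ε(u) = ½‖u‖² − (λ₁+ε)G(u) − (λ₂+ε)G(−u)`, and `c(ε)` the
mountain pass value over paths from `0` to `ū`. Assume (a) `I_0(ū) < 0`; (b) `c(ε) ≥ ρ > 0`
for all `ε ∈ [0, η₀]`; (c) `c(ε) = c(0) + c'ε + o(ε)` as `ε → 0⁺`. Then `I_0` admits a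
bounded Palais–Smale sequence at level `c(0)`. -/
theorem stmt_14 {E : Type*} [NormedAddCommGroup E] [InnerProductSpace ℝ E]
    [CompleteSpace E]
    (G : E → ℝ) (hGconv : ConvexOn ℝ Set.univ G)
    (G' : E → E →L[ℝ] ℝ) (hGdiff : ∀ u, HasFDerivAt G (G' u) u) (hGC1 : Continuous G')
    (hG0 : G 0 = 0) (hGsym : ∀ u : E, 0 ≤ G u + G (-u))
    (hGbdd : ∀ s : Set E, Bornology.IsBounded s → Bornology.IsBounded (G' '' s))
    (l₁ l₂ : ℝ) (hl₁ : 0 < l₁) (hl₂ : 0 < l₂) (ubar : E)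
    (I : ℝ → E → ℝ)
    (hI : ∀ ε : ℝ, 0 ≤ ε → ∀ u : E,
      I ε u = (1 / 2) * ‖u‖ ^ 2 - (l₁ + ε) * G u - (l₂ + ε) * G (-u))
    (c : ℝ → ℝ)
    (hc : ∀ ε : ℝ, 0 ≤ ε → c ε =
      sInf ((fun γ : ℝ → E => sSup ((fun t => I ε (γ t)) '' Set.Icc (0:ℝ) 1)) ''
        {γ : ℝ → E | ContinuousOn γ (Set.Icc 0 1) ∧ γ 0 = 0 ∧ γ 1 = ubar}))
    (ha : I 0 ubar < 0)
    (ρ η₀ : ℝ) (hρ : 0 < ρ) (hη₀ : 0 < η₀) (hb : ∀ ε ∈ Set.Icc (0:ℝ) η₀, ρ ≤ c ε)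
    (c' : ℝ)
    (hc' : (fun ε => c ε - c 0 - c' * ε) =o[nhdsWithin 0 (Set.Ioi 0)] fun ε => ε) :
    ∃ u : ℕ → E, (∃ M : ℝ, ∀ n, ‖u n‖ ≤ M) ∧
      Tendsto (fun n => I 0 (u n)) atTop (𝓝 (c 0)) ∧
      Tendsto (fun n => ‖fderiv ℝ (I 0) (u n)‖) atTop (𝓝 0) := by
  have hG'neg : ∀ u, HasFDerivAt (fun u => G (-u)) (-(G' (-u))) u := fun u => by
    have h := (hGdiff (-u)).comp u (hasFDerivAt_id u).neg
    simpa [Function.comp_def, ContinuousLinearMap.comp_neg] using h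
  let D : ℝ → E → E →L[ℝ] ℝ := fun ε u =>
    innerSL ℝ u - (l₁ + ε) • G' u + (l₂ + ε) • G' (-u)
  have hDcont : ∀ ε, Continuous (D ε) := fun ε => by
    have h : Continuous fun u : E => innerSL ℝ u := (innerSL ℝ).continuous
    have hneg : Continuous fun u => G' (-u) := hGC1.comp continuous_neg
    exact (h.sub (hGC1.const_smul (l₁ + ε))).add (hneg.const_smul (l₂ + ε))
  have hID : ∀ ε, 0 ≤ ε → ∀ u, HasFDerivAt (I ε) (D ε u) u := by
    intro ε hε u
    rw [show I ε = _ from funext (hI ε hε)]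
    have h1 : HasFDerivAt (fun u : E => (1 / 2) * ‖u‖ ^ 2) (innerSL ℝ u) u := by
      refine ((hasStrictFDerivAt_norm_sq u).hasFDerivAt.const_mul (1 / 2 : ℝ)).congr_fderiv ?_
      ext v
      simp
    refine ((h1.sub ((hGdiff u).const_mul (l₁ + ε))).sub
      ((hG'neg u).const_mul (l₂ + ε))).congr_fderiv ?_
    simp only [D]
    module
  have hIcont : ∀ ε, 0 ≤ ε → Continuous (I ε) := fun ε hε =>
    continuous_iff_continuousAt.2 fun u => (hID ε hε u).continuousAt
  have hIJ : ∀ ε, 0 ≤ ε → ∀ u, I ε u = I 0 u - ε * (G u + G (-u)) := fun ε hε u => by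
    rw [hI ε hε, hI 0 le_rfl]
    ring
  have hcpos : ∀ ε ∈ Set.Icc (0 : ℝ) η₀, 0 < c ε := fun ε hε => hρ.trans_le (hb ε hε)
  have hcle : ∀ ε ∈ Set.Icc (0 : ℝ) η₀, ∀ γ : C(unitInterval, E), γ 0 = 0 → γ 1 = ubar →
      c ε ≤ ⨆ t, I ε (γ t) := by
    intro ε hε γ h0 h1
    have hpos := hcpos ε hε
    rw [hc ε hε.1] at hpos ⊢
    refine csInf_le (by_contra fun hnb => hpos.ne' (Real.sInf_of_not_bddBelow hnb))
      ⟨Set.IccExtend zero_le_one γ, ⟨?_, ?_, ?_⟩, ?_⟩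
    · exact γ.continuous.Icc_extend'.continuousOn
    · rw [Set.IccExtend_left]
      exact h0
    · rw [Set.IccExtend_right]
      exact h1
    · simp only [Set.image_eq_range, ← sSup_range]
      congr 2
      ext t
      simp
  have hpath : ∀ ε > 0, ∃ γ : C(unitInterval, E), γ 0 = 0 ∧ γ 1 = ubar ∧
      ∀ t, I 0 (γ t) ≤ c 0 + ε := by
    intro ε hε
    have hpos := hcpos 0 ⟨le_rfl, hη₀.le⟩
    have hlt : c 0 < c 0 + ε := by linarith
    rw [hc 0 le_rfl] at hpos
    nth_rewrite 1 [hc 0 le_rfl] at hlt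
    obtain ⟨_, ⟨γ, ⟨hγ, h0, h1⟩, rfl⟩, hγlt⟩ := exists_lt_of_csInf_lt
      (Set.nonempty_iff_ne_empty.2 fun hem => hpos.ne' (by rw [hem, Real.sInf_empty])) hlt
    refine ⟨⟨Set.domRestrict (Set.Icc 0 1) γ, hγ.domRestrict⟩, h0, h1, fun t => ?_⟩
    refine (le_csSup ?_ (Set.mem_image_of_mem (fun t => I 0 (γ t)) t.2)).trans hγlt.le
    exact (isCompact_Icc.image_of_continuousOn
      ((hIcont 0 le_rfl).comp_continuousOn hγ)).bddAbove
  have hεbound : ∀ᶠ ε in 𝓝[>] (0 : ℝ), c 0 - (|c'| + 1) * ε ≤ c ε := by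
    filter_upwards [hc'.bound one_pos, self_mem_nhdsWithin] with ε h (hε : 0 < ε)
    rw [one_mul, Real.norm_eq_abs, Real.norm_eq_abs, abs_of_pos hε] at h
    have h1 := (abs_le.1 h).1
    have h2 := mul_le_mul_of_nonneg_right (neg_abs_le c') hε.le
    linarith
  obtain ⟨R, hR⟩ : ∃ R, ∀ u, I 0 u ≤ c 0 + 1 → G u + G (-u) ≤ |c'| + 3 → ‖u‖ ≤ R := by
    set A := (l₁ + l₂) * ‖G' 0‖
    set B := c 0 + 1 + (l₁ + l₂) * (|c'| + 3)
    refine ⟨2 * A + |B| + 2, fun u hu hJ => ?_⟩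
    have hlow : ∀ v, -(‖G' 0‖ * ‖v‖) ≤ G v := fun v => by
      have h1 := hGconv.apply_le_sub_of_hasFDerivAt_zero (hGdiff 0) v
      have h2 := (abs_le.1 ((G' 0).le_opNorm v)).1
      linarith
    have h1 := hlow u
    have h2 := hlow (-u)
    rw [norm_neg] at h2
    have h3 : l₁ * G u ≤ l₁ * (|c'| + 3 + ‖G' 0‖ * ‖u‖) := by gcongr; linarith
    have h4 : l₂ * G (-u) ≤ l₂ * (|c'| + 3 + ‖G' 0‖ * ‖u‖) := by gcongr; linarith
    rw [hI 0 le_rfl] at hu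
    have hquad : 1 / 2 * ‖u‖ ^ 2 ≤ B + A * ‖u‖ := by
      simp only [A, B]
      linarith
    have hA : 0 ≤ A := by positivity
    by_contra! hlt
    nlinarith [le_abs_self B, abs_nonneg B, norm_nonneg u]
  obtain ⟨B, hB⟩ := (hGbdd _ (Metric.isBounded_closedBall (x := (0 : E)) (r := R))).exists_norm_le
  have hB' : ∀ u, ‖u‖ ≤ R → ‖G' u‖ ≤ |B| := fun u hu =>
    (hB _ ⟨u, by simpa using hu, rfl⟩).trans (le_abs_self B)
  have main : ∀ δ > 0, ∃ u, ‖u‖ ≤ R ∧ |I 0 u - c 0| ≤ δ ∧ ‖fderiv ℝ (I 0) u‖ ≤ δ := by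
    intro δ hδ
    have small : ∀ a > 0, ∀ b > 0, ∀ᶠ ε in 𝓝[>] (0 : ℝ), b * ε < a := fun a ha b _ => by
      refine (Tendsto.eventually_lt_const ha ?_).filter_mono nhdsWithin_le_nhds
      simpa using (continuous_const_mul b).tendsto 0
    obtain ⟨ε, hε0, hcε, hε1, hεη, hερ, hεδ, hεc, hεB⟩ :=
      (eventually_mem_nhdsWithin.and (hεbound.and ((small 1 one_pos 1 one_pos).and
        ((small η₀ hη₀ 1 one_pos).and ((small ρ hρ 1 one_pos).and ((small δ hδ 1 one_pos).and
        ((small δ hδ (|c'| + 2) (by positivity)).and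
        (small (δ / 4) (by positivity) (2 * |B| + 1) (by positivity))))))))).exists
    rw [one_mul] at hε1 hεη hερ hεδ
    have hε : 0 < ε := hε0
    have hεmem : ε ∈ Set.Icc 0 η₀ := ⟨hε.le, hεη.le⟩
    have hmρ : 0 ≤ c ε - ε := by linarith [hb ε hεmem]
    have hJnn : ∀ u, I ε u ≤ I 0 u := fun u => by
      rw [hIJ ε hε.le]
      linarith [mul_nonneg hε.le (hGsym u)]
    obtain ⟨u, hu0, hu1, hu⟩ := exists_almost_critical_of_mountain_pass (hID 0 le_rfl)
      (hID ε hε.le) (hDcont 0) (hDcont ε) (a := 0) (b := ubar) (C := c 0 + ε) (m := c ε - ε)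
      hδ (by linarith) (by simpa [hI ε hε.le, hG0] using hmρ)
      (by linarith [hJnn ubar]) (hpath ε hε) (hcle ε hεmem)
    have hJ : G u + G (-u) ≤ |c'| + 3 := by
      refine le_of_mul_le_mul_left ?_ hε
      have := hIJ ε hε.le u
      linarith
    have huR : ‖u‖ ≤ R := hR u (by linarith) hJ
    refine ⟨u, huR, abs_le.2 ⟨?_, ?_⟩, ?_⟩
    · linarith [hJnn u]
    · linarith
    · rw [(hID 0 le_rfl u).fderiv]
      refine (hu ?_).le
      have hdiff : D ε u - D 0 u = ε • (G' (-u) - G' u) := by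
        simp only [D]
        module
      rw [hdiff, norm_smul, Real.norm_eq_abs, abs_of_pos hε]
      have h1 := norm_sub_le (G' (-u)) (G' u)
      have h2 : ‖G' (-u) - G' u‖ ≤ 2 * |B| + 1 := by
        linarith [hB' u huR, hB' (-u) (by rwa [norm_neg])]
      have := mul_le_mul_of_nonneg_left h2 hε.le
      linarith
  choose u huR huI huD using fun n : ℕ => main (1 / ((n : ℝ) + 1)) Nat.one_div_pos_of_nat
  have h0 := tendsto_one_div_add_atTop_nhds_zero_nat (𝕜 := ℝ)
  exact ⟨u, ⟨R, huR⟩, tendsto_iff_dist_tendsto_zero.2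
    (squeeze_zero (fun n => dist_nonneg) huI h0), squeeze_zero (fun n => norm_nonneg _) huD h0⟩
end
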